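/- Let J be a g-function with log J in the Walters class W(Ω,σ). Then there exists exactly one Borel probability measure μ on Ω with L_{log J}^* μ = μ; this μ is σ-invariant and fully supported, the topological pressure satisfies P(log J)=0, μ is the unique equilibrium state of log J, and its Kolmogorov–Sinai entropy satisfies h_μ(σ) = −∫_Ω log J dμ > 0. -/

import Mathlib

open Real MeasureTheory Filter Topology Set

open scoped Classical

namespace GS

/-- The full shift space `Ω = 𝒜^ℕ`. -/
abbrev Omega (𝒜 : Type) : Type := ℕ → 𝒜

variable {𝒜 : Type}

/-- The left shift `σ(x₁,x₂,…) = (x₂,x₃,…)`. -/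
def shift (x : Omega 𝒜) : Omega 𝒜 := fun n => x (n + 1)

/-- Prepending a symbol: `qx = (q,x₁,x₂,…)`. -/
def cons (q : 𝒜) (x : Omega 𝒜) : Omega 𝒜 := fun n => Nat.casesOn n q x

/-- Concatenation `wx` of a finite word `w ∈ 𝒜^k` with `x ∈ Ω`. -/
def concat {k : ℕ} (w : Fin k → 𝒜) (x : Omega 𝒜) : Omega 𝒜 :=
  fun n => if h : n < k then w ⟨n, h⟩ else x (n - k)

/-- The metric `d(x,y) = 2^{-N(x,y)}`, `N(x,y) = inf{k ≥ 1 : x_k ≠ y_k}`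
(sequences are indexed from `0` in Lean, whence the `+ 1`). -/
noncomputable def dOmega (x y : Omega 𝒜) : ℝ :=
  if x = y then 0 else (1 / 2 : ℝ) ^ (sInf {k : ℕ | x k ≠ y k} + 1)

/-- `a : Ω → E` is `α`-Hölder (w.r.t. `dOmega`):
`Hol_α(a) = sup_{x≠y} ‖a x - a y‖ / d(x,y)^α < ∞`. -/
def IsHolderW (α : ℝ) {E : Type*} [NormedAddCommGroup E] (a : Omega 𝒜 → E) : Prop :=
  ∃ C : ℝ, ∀ x y : Omega 𝒜, ‖a x - a y‖ ≤ C * (dOmega x y) ^ α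

/-- The Hölder constant `Hol_α(a) = sup_{x≠y} ‖a x - a y‖ / d(x,y)^α`. -/
noncomputable def HolConst (α : ℝ) {E : Type*} [NormedAddCommGroup E] (a : Omega 𝒜 → E) : ℝ :=
  sSup {r : ℝ | ∃ x y : Omega 𝒜, x ≠ y ∧ r = ‖a x - a y‖ / (dOmega x y) ^ α}

/-- `J` is a `g`-function: continuous, strictly positive, with `∑_{q∈𝒜} J(qx) = 1`. -/
def IsGFunction [Fintype 𝒜] [TopologicalSpace 𝒜] (J : Omega 𝒜 → ℝ) : Prop :=
  Continuous J ∧ (∀ x, 0 < J x) ∧ ∀ x : Omega 𝒜, ∑ q : 𝒜, J (cons q x) = 1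

/-- The Ruelle transfer operator `(L_f φ)(x) = ∑_{q∈𝒜} e^{f(qx)} φ(qx)`. -/
noncomputable def ruelle [Fintype 𝒜] {E : Type*} [AddCommMonoid E] [Module ℝ E]
    (f : Omega 𝒜 → ℝ) (φ : Omega 𝒜 → E) : Omega 𝒜 → E :=
  fun x => ∑ q : 𝒜, Real.exp (f (cons q x)) • φ (cons q x)

/-- Birkhoff sum `S_k(f) = ∑_{j=0}^{k-1} f ∘ σ^j`. -/
def birkhoff (f : Omega 𝒜 → ℝ) (k : ℕ) (x : Omega 𝒜) : ℝ :=
  ∑ j ∈ Finset.range k, f (shift^[j] x)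

/-- `𝕁(wx) = exp (S_k(log J)(wx))` for a word `w` of length `k`. -/
noncomputable def JBirk (J : Omega 𝒜 → ℝ) (k : ℕ) (w : Fin k → 𝒜) (x : Omega 𝒜) : ℝ :=
  Real.exp (birkhoff (fun z => Real.log (J z)) k (concat w x))

/-- `ζ₊(s) = ∑_{k≥1} ∑_{w∈𝒜^k} a(wx) 𝕁(wx)^s`. -/
noncomputable def zetaPlus [Fintype 𝒜] (J : Omega 𝒜 → ℝ) (a : Omega 𝒜 → ℂ) (x : Omega 𝒜)
    (s : ℝ) : ℂ :=
  ∑' k : ℕ, ∑ w : Fin (k + 1) → 𝒜, a (concat w x) * (((JBirk J (k + 1) w x) ^ s : ℝ) : ℂ)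

/-- `ζ₋(s) = ∑_{k≥1} ∑_{w∈𝒜^k} a(wy) 𝕁(wx)^s`. -/
noncomputable def zetaMinus [Fintype 𝒜] (J : Omega 𝒜 → ℝ) (a : Omega 𝒜 → ℂ) (x y : Omega 𝒜)
    (s : ℝ) : ℂ :=
  ∑' k : ℕ, ∑ w : Fin (k + 1) → 𝒜, a (concat w y) * (((JBirk J (k + 1) w x) ^ s : ℝ) : ℂ)

/-- `L_{log J}^* μ = μ`, i.e. `μ` is a `g`-measure of `J`, tested against continuous functions. -/
def IsGMeasure [Fintype 𝒜] [TopologicalSpace 𝒜] [MeasurableSpace 𝒜]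
    (J : Omega 𝒜 → ℝ) (μ : Measure (Omega 𝒜)) : Prop :=
  IsProbabilityMeasure μ ∧
    ∀ φ : Omega 𝒜 → ℂ, Continuous φ →
      ∫ x, ruelle (fun z => Real.log (J z)) φ x ∂μ = ∫ x, φ x ∂μ

/-- The cylinder set determined by a finite word. -/
def cyl {k : ℕ} (w : Fin k → 𝒜) : Set (Omega 𝒜) := {x | ∀ i : Fin k, x (i : ℕ) = w i}

/-- Entropy of the partition into cylinders of length `n`. -/
noncomputable def blockEntropy [Fintype 𝒜] [MeasurableSpace 𝒜] (μ : Measure (Omega 𝒜))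
    (n : ℕ) : ℝ :=
  ∑ w : Fin n → 𝒜, Real.negMulLog (μ (cyl w)).toReal

/-- Kolmogorov–Sinai entropy `h_μ(σ)` of a shift-invariant measure, computed through the
generating partition into cylinders: `h_μ(σ) = lim_n H_n/n = inf_{n≥1} H_n/n`. -/
noncomputable def KSentropy [Fintype 𝒜] [MeasurableSpace 𝒜] (μ : Measure (Omega 𝒜)) : ℝ :=
  ⨅ n : ℕ, blockEntropy μ (n + 1) / (n + 1)

/-- Topological pressure `P(f) = sup {h_μ(σ) + ∫ f dμ}` over shift-invariant Borel
probability measures. -/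
noncomputable def pressure [Fintype 𝒜] [MeasurableSpace 𝒜] (f : Omega 𝒜 → ℝ) : ℝ :=
  sSup {r : ℝ | ∃ μ : Measure (Omega 𝒜), IsProbabilityMeasure μ ∧
    Measure.map shift μ = μ ∧ r = KSentropy μ + ∫ x, f x ∂μ}

/-- `μ` is an equilibrium state of `f`. -/
def IsEquilibrium [Fintype 𝒜] [MeasurableSpace 𝒜] (f : Omega 𝒜 → ℝ)
    (μ : Measure (Omega 𝒜)) : Prop :=
  IsProbabilityMeasure μ ∧ Measure.map shift μ = μ ∧
    KSentropy μ + ∫ x, f x ∂μ = pressure f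

/-- The Walters class `W(Ω,σ)`:
`sup_{n≥1} sup_{w∈𝒜^n} |S_n(f)(wx) − S_n(f)(wy)| → 0` as `d(x,y) → 0`. -/
def WaltersClass [TopologicalSpace 𝒜] (f : Omega 𝒜 → ℝ) : Prop :=
  Continuous f ∧ ∀ ε > (0:ℝ), ∃ δ > (0:ℝ), ∀ x y : Omega 𝒜, dOmega x y < δ →
    ∀ (n : ℕ) (w : Fin n → 𝒜),
      |birkhoff f n (concat w x) - birkhoff f n (concat w y)| ≤ ε

/-- The set `W*` of finite (nonempty) words over `𝒜`. -/
def Words (𝒜 : Type) : Type := Σ k : ℕ, Fin (k + 1) → 𝒜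

end GS
namespace GS

section basics

variable {𝒜 : Type}

lemma shift_iter (n : ℕ) (x : Omega 𝒜) (k : ℕ) : (shift^[n] x) k = x (k + n) := by
  induction n generalizing x with
  | zero => rfl
  | succ n ih =>
    rw [Function.iterate_succ_apply, ih]
    simp only [shift]
    congr 1

lemma shift_cons (q : 𝒜) (x : Omega 𝒜) : shift (cons q x) = x := rfl

lemma concat_lt {k : ℕ} (w : Fin k → 𝒜) (x : Omega 𝒜) {n : ℕ} (h : n < k) :
    concat w x n = w ⟨n, h⟩ := by simp [concat, h]

lemma concat_ge {k : ℕ} (w : Fin k → 𝒜) (x : Omega 𝒜) {n : ℕ} (h : k ≤ n) :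
    concat w x n = x (n - k) := by simp [concat, not_lt.2 h]

lemma shift_concat {k : ℕ} (w : Fin k → 𝒜) (x : Omega 𝒜) : shift^[k] (concat w x) = x := by
  funext n
  rw [shift_iter, concat_ge _ _ (Nat.le_add_left _ _)]
  simp

lemma concat_self (k : ℕ) (z : Omega 𝒜) : concat (fun i : Fin k => z i) (shift^[k] z) = z := by
  funext n
  by_cases h : n < k
  · rw [concat_lt _ _ h]
  · rw [concat_ge _ _ (not_lt.1 h), shift_iter]
    congr 1
    omega

lemma concat_snoc {k : ℕ} (w : Fin k → 𝒜) (q : 𝒜) (x : Omega 𝒜) :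
    concat (Fin.snoc (α := fun _ => 𝒜) w q) x = concat w (cons q x) := by
  funext n
  rcases lt_trichotomy n k with h | h | h
  · rw [concat_lt _ _ h, concat_lt _ _ (h.trans (Nat.lt_succ_self k))]
    simp [Fin.snoc, h]
  · subst h
    rw [concat_lt _ _ (Nat.lt_succ_self n), concat_ge _ _ le_rfl]
    simp [Fin.snoc, cons]
  · rw [concat_ge _ _ h, concat_ge _ _ h.le]
    obtain ⟨m, rfl⟩ := Nat.exists_eq_add_of_lt h
    have e1 : k + m + 1 - (k + 1) = m := by omega
    have e2 : k + m + 1 - k = m + 1 := by omega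
    rw [e1, e2]
    rfl

lemma concat_zero (w : Fin 0 → 𝒜) (x : Omega 𝒜) : concat w x = x := by
  funext n
  simp [concat]

lemma concat_mem_cyl {k : ℕ} (w w' : Fin k → 𝒜) (x : Omega 𝒜) :
    concat w' x ∈ cyl w ↔ w' = w := by
  simp only [cyl, mem_setOf_eq]
  constructor
  · intro h
    funext i
    rw [← h i, concat_lt _ _ i.2]
  · rintro rfl i
    rw [concat_lt _ _ i.2]

lemma mem_cyl_iff {k : ℕ} (w : Fin k → 𝒜) (x : Omega 𝒜) :
    x ∈ cyl w ↔ (fun i : Fin k => x i) = w := by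
  simp only [cyl, mem_setOf_eq]
  exact ⟨fun h => funext h, fun h i => congrFun h i⟩

variable [TopologicalSpace 𝒜]

lemma continuous_shift : Continuous (shift : Omega 𝒜 → Omega 𝒜) := by
  unfold shift
  fun_prop

lemma continuous_cons (q : 𝒜) : Continuous (cons q : Omega 𝒜 → Omega 𝒜) := by
  refine continuous_pi fun n => ?_
  cases n with
  | zero => exact continuous_const
  | succ n => exact continuous_apply n

lemma continuous_concat {k : ℕ} (w : Fin k → 𝒜) :
    Continuous (concat w : Omega 𝒜 → Omega 𝒜) := by
  refine continuous_pi fun n => ?_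
  by_cases h : n < k
  · simpa only [concat_lt w _ h] using continuous_const
  · simpa only [concat_ge w _ (not_lt.1 h)] using continuous_apply _

lemma continuous_birkhoff {f : Omega 𝒜 → ℝ} (hf : Continuous f) (n : ℕ) :
    Continuous (birkhoff f n) := by
  unfold birkhoff
  exact continuous_finset_sum _ fun j _ => hf.comp (continuous_shift.iterate j)

variable [DiscreteTopology 𝒜]

lemma isClopen_cyl {k : ℕ} (w : Fin k → 𝒜) : IsClopen (cyl w) := by
  have : cyl w = ⋂ i : Fin k, (fun x : Omega 𝒜 => x i) ⁻¹' {w i} := by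
    ext x; simp [cyl]
  rw [this]
  exact isClopen_iInter_of_finite fun i => (isClopen_discrete _).preimage (continuous_apply _)

lemma unif_cont [Fintype 𝒜] {φ : Omega 𝒜 → ℝ} (hφ : Continuous φ) {ε : ℝ} (hε : 0 < ε) :
    ∃ N : ℕ, ∀ x y : Omega 𝒜, (∀ i < N, x i = y i) → |φ x - φ y| < ε := by
  letI : MetricSpace (ℕ → 𝒜) := PiNat.metricSpace (E := fun _ => 𝒜)
  have h := CompactSpace.uniformContinuous_of_continuous hφ
  obtain ⟨δ, hδ, h⟩ := Metric.uniformContinuous_iff.1 h ε hε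
  obtain ⟨N, hN⟩ := exists_pow_lt_of_lt_one hδ (by norm_num : (1/2 : ℝ) < 1)
  refine ⟨N, fun x y hxy => ?_⟩
  have := @h x y (lt_of_le_of_lt (PiNat.mem_cylinder_iff_dist_le.1 ?_) hN)
  · simpa [Real.dist_eq] using this
  · exact PiNat.mem_cylinder_iff.2 hxy

lemma open_cyl [Fintype 𝒜] {U : Set (Omega 𝒜)} (hU : IsOpen U) {x : Omega 𝒜} (hx : x ∈ U) :
    ∃ N : ℕ, ∀ y : Omega 𝒜, (∀ i < N, y i = x i) → y ∈ U := by
  letI : MetricSpace (ℕ → 𝒜) := PiNat.metricSpace (E := fun _ => 𝒜)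
  obtain ⟨δ, hδ, h⟩ := Metric.isOpen_iff.1 hU x hx
  obtain ⟨N, hN⟩ := exists_pow_lt_of_lt_one hδ (by norm_num : (1/2 : ℝ) < 1)
  refine ⟨N, fun y hxy => h ?_⟩
  exact lt_of_le_of_lt (PiNat.mem_cylinder_iff_dist_le.1 (PiNat.mem_cylinder_iff.2 hxy)) hN

lemma exists_bound [Fintype 𝒜] {φ : Omega 𝒜 → ℝ} (hφ : Continuous φ) :
    ∃ M : ℝ, 0 ≤ M ∧ ∀ x, |φ x| ≤ M := by
  obtain ⟨M, hM⟩ := isCompact_univ.exists_bound_of_continuousOn (f := φ) hφ.continuousOn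
  refine ⟨max M 0, le_max_right _ _, fun x => ?_⟩
  exact (hM x (mem_univ x)).trans (le_max_left _ _)

end basics

section transfer

variable {𝒜 : Type} [Fintype 𝒜]

lemma birkhoff_snoc (f : Omega 𝒜 → ℝ) {n : ℕ} (w : Fin n → 𝒜) (q : 𝒜) (x : Omega 𝒜) :
    birkhoff f (n + 1) (concat (Fin.snoc (α := fun _ => 𝒜) w q) x)
      = birkhoff f n (concat w (cons q x)) + f (cons q x) := by
  rw [concat_snoc, birkhoff, Finset.sum_range_succ, shift_concat]
  rfl

lemma ruelle_iter (f : Omega 𝒜 → ℝ) (φ : Omega 𝒜 → ℝ) (n : ℕ) (x : Omega 𝒜) :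
    ((ruelle f)^[n] φ) x
      = ∑ w : Fin n → 𝒜, Real.exp (birkhoff f n (concat w x)) * φ (concat w x) := by
  induction n generalizing x with
  | zero => simp [birkhoff, concat_zero]
  | succ n ih =>
    rw [Function.iterate_succ_apply', ← (Fin.snocEquiv (fun _ => 𝒜)).sum_comp,
      Fintype.sum_prod_type]
    simp only [ruelle, ih]
    refine Finset.sum_congr rfl fun q _ => ?_
    rw [smul_eq_mul, Finset.mul_sum]
    refine Finset.sum_congr rfl fun w _ => ?_
    have h1 : (Fin.snocEquiv (fun _ => 𝒜)) (q, w) = Fin.snoc (α := fun _ => 𝒜) w q := rfl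
    rw [h1, birkhoff_snoc, concat_snoc, Real.exp_add]
    ring

variable {f : Omega 𝒜 → ℝ}

lemma sum_weights (h1 : ∀ x, ∑ q : 𝒜, Real.exp (f (cons q x)) = 1) (n : ℕ) (x : Omega 𝒜) :
    ∑ w : Fin n → 𝒜, Real.exp (birkhoff f n (concat w x)) = 1 := by
  have h : ruelle f (fun _ => (1 : ℝ)) = fun _ => (1 : ℝ) := by
    funext x
    simpa [ruelle] using h1 x
  have := ruelle_iter f (fun _ => (1 : ℝ)) n x
  rw [Function.iterate_fixed h] at this
  simpa using this.symm

lemma ruelle_iter_shift_mul (φ ψ : Omega 𝒜 → ℝ) (n : ℕ) (x : Omega 𝒜) :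
    ((ruelle f)^[n] (fun z => φ (shift^[n] z) * ψ z)) x = φ x * ((ruelle f)^[n] ψ) x := by
  rw [ruelle_iter, ruelle_iter, Finset.mul_sum]
  refine Finset.sum_congr rfl fun w _ => ?_
  simp only [shift_concat]
  ring

lemma ruelle_iter_indicator {n : ℕ} (w : Fin n → 𝒜) (x : Omega 𝒜) :
    ((ruelle f)^[n] ((cyl w).indicator (fun _ => (1 : ℝ)))) x
      = Real.exp (birkhoff f n (concat w x)) := by
  rw [ruelle_iter, Finset.sum_eq_single w]
  · rw [indicator_of_mem ((concat_mem_cyl w w x).2 rfl), mul_one]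
  · intro w' _ hw
    rw [indicator_of_notMem (fun h => hw ((concat_mem_cyl w w' x).1 h)), mul_zero]
  · simp

variable [TopologicalSpace 𝒜]

lemma continuous_ruelle_iter (hf : Continuous f) {φ : Omega 𝒜 → ℝ} (hφ : Continuous φ) (n : ℕ) :
    Continuous ((ruelle f)^[n] φ) := by
  have : (ruelle f)^[n] φ = fun x =>
      ∑ w : Fin n → 𝒜, Real.exp (birkhoff f n (concat w x)) * φ (concat w x) :=
    funext (ruelle_iter f φ n)
  rw [this]
  refine continuous_finset_sum _ fun w _ => ?_
  exact (Real.continuous_exp.comp ((continuous_birkhoff hf n).comp (continuous_concat w))).mul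
    (hφ.comp (continuous_concat w))

variable [DiscreteTopology 𝒜]

/-- Bounded distortion (Bowen's condition). -/
lemma distortion (hW : WaltersClass f) : ∃ C : ℝ, 0 ≤ C ∧ ∀ (n : ℕ) (z z' : Omega 𝒜),
    (∀ i < n, z i = z' i) → birkhoff f n z - birkhoff f n z' ≤ C := by
  obtain ⟨hf, hW⟩ := hW
  obtain ⟨M, hM0, hM⟩ := exists_bound hf
  obtain ⟨δ, hδ, h⟩ := hW 1 one_pos
  obtain ⟨m, hm⟩ := exists_pow_lt_of_lt_one hδ (by norm_num : (1/2 : ℝ) < 1)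
  have hb : ∀ k z, |birkhoff f k z| ≤ k * M := by
    intro k z
    calc |birkhoff f k z| ≤ ∑ j ∈ Finset.range k, |f (shift^[j] z)| :=
          Finset.abs_sum_le_sum_abs _ _
      _ ≤ ∑ j ∈ Finset.range k, M := Finset.sum_le_sum fun j _ => hM _
      _ = k * M := by simp
  refine ⟨1 + 2 * (m * M), by positivity, fun n z z' hz => ?_⟩
  rcases le_total n m with hnm | hnm
  · have h1 := abs_le.1 (hb n z)
    have h2 := abs_le.1 (hb n z')
    have h3 : (n : ℝ) * M ≤ m * M := by gcongr
    linarith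
  · obtain ⟨k, rfl⟩ := Nat.exists_eq_add_of_le' hnm
    have hsplit : ∀ y, birkhoff f (k + m) y = birkhoff f k y + birkhoff f m (shift^[k] y) := by
      intro y
      simp only [birkhoff]
      rw [Finset.sum_range_add]
      congr 1
      refine Finset.sum_congr rfl fun j _ => ?_
      rw [← Function.iterate_add_apply, add_comm]
    have hd : dOmega (shift^[k] z) (shift^[k] z') < δ := by
      unfold dOmega
      split_ifs with he
      · exact hδ
      · refine lt_of_le_of_lt ?_ hm
        refine pow_le_pow_of_le_one (by norm_num) (by norm_num) ?_
        refine le_trans ?_ (Nat.le_succ _)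
        refine le_csInf ?_ ?_
        · by_contra hne
          apply he
          funext i
          by_contra hi
          exact hne ⟨i, hi⟩
        · intro i hi
          by_contra hlt
          apply hi
          rw [shift_iter, shift_iter]
          exact hz _ (by omega)
    have h4 := h _ _ hd k (fun i => z i)
    rw [concat_self] at h4
    have h5 : (fun i : Fin k => z i) = fun i : Fin k => z' i :=
      funext fun i => hz _ (by omega)
    rw [h5, concat_self] at h4
    have h1 := abs_le.1 (hb m (shift^[k] z))
    have h2 := abs_le.1 (hb m (shift^[k] z'))
    have h6 := abs_le.1 h4
    rw [hsplit, hsplit]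
    linarith

/-- Contraction of oscillation. -/
lemma contraction [Nonempty 𝒜] (h1 : ∀ x, ∑ q : 𝒜, Real.exp (f (cons q x)) = 1)
    {C : ℝ} (hC : ∀ (n : ℕ) (z z' : Omega 𝒜),
      (∀ i < n, z i = z' i) → birkhoff f n z - birkhoff f n z' ≤ C) (hC0 : 0 ≤ C)
    {φ : Omega 𝒜 → ℝ} (hφ : Continuous φ) {a : ℝ} (ha : ∀ x y, φ x - φ y ≤ a)
    {ε : ℝ} (hε : 0 < ε) :
    ∃ N, ∀ n ≥ N, ∀ x y, ((ruelle f)^[n] φ) x - ((ruelle f)^[n] φ) y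
      ≤ (1 - Real.exp (-C)) * a + ε := by
  obtain ⟨z0, -, hz0⟩ := isCompact_univ.exists_isMinOn (univ_nonempty (α := Omega 𝒜))
    hφ.continuousOn
  have hmin : ∀ x, φ z0 ≤ φ x := fun x => hz0 (mem_univ x)
  obtain ⟨N, hN⟩ := unif_cont hφ hε
  refine ⟨N, fun n hn x y => ?_⟩
  have hc1 : Real.exp (-C) ≤ 1 := Real.exp_le_one_iff.2 (by linarith)
  have hc0 := Real.exp_pos (-C)
  have key : ∀ w : Fin n → 𝒜,
      Real.exp (birkhoff f n (concat w x)) * (φ (concat w x) - φ z0)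
      - Real.exp (birkhoff f n (concat w y)) * (φ (concat w y) - φ z0)
      ≤ Real.exp (birkhoff f n (concat w x)) * ((1 - Real.exp (-C)) * a + ε) := by
    intro w
    have hagree : ∀ i < n, concat w x i = concat w y i := fun i hi => by
      rw [concat_lt _ _ hi, concat_lt _ _ hi]
    have hp : Real.exp (-C) * Real.exp (birkhoff f n (concat w x))
        ≤ Real.exp (birkhoff f n (concat w y)) := by
      rw [← Real.exp_add]
      apply Real.exp_le_exp.2
      linarith [hC n _ _ hagree]
    have hv := (abs_lt.1 (hN (concat w x) (concat w y) fun i hi => hagree i (by omega))).2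
    have h2 := ha (concat w x) z0
    have h3 := hmin (concat w y)
    have hpx := Real.exp_pos (birkhoff f n (concat w x))
    have h4 := mul_le_mul_of_nonneg_right hp (sub_nonneg.2 h3)
    have h5 : (1 - Real.exp (-C)) * (φ (concat w x) - φ z0)
        + Real.exp (-C) * (φ (concat w x) - φ (concat w y))
        ≤ (1 - Real.exp (-C)) * a + ε := by
      have := mul_le_mul_of_nonneg_left h2 (sub_nonneg.2 hc1)
      have h7 : Real.exp (-C) * (φ (concat w x) - φ (concat w y)) ≤ Real.exp (-C) * ε :=
        mul_le_mul_of_nonneg_left hv.le hc0.le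
      have h8 : Real.exp (-C) * ε ≤ 1 * ε := mul_le_mul_of_nonneg_right hc1 hε.le
      linarith
    have h6 := mul_le_mul_of_nonneg_left h5 hpx.le
    nlinarith
  have hs := Finset.sum_le_sum fun w (_ : w ∈ Finset.univ) => key w
  rw [← Finset.sum_mul, sum_weights h1, Finset.sum_sub_distrib] at hs
  simp only [mul_sub, Finset.sum_sub_distrib] at hs
  rw [← Finset.sum_mul, ← Finset.sum_mul, sum_weights h1, sum_weights h1] at hs
  rw [ruelle_iter, ruelle_iter]
  linarith

lemma osc_tendsto [Nonempty 𝒜] (hf : Continuous f)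
    (h1 : ∀ x, ∑ q : 𝒜, Real.exp (f (cons q x)) = 1)
    {C : ℝ} (hC : ∀ (n : ℕ) (z z' : Omega 𝒜),
      (∀ i < n, z i = z' i) → birkhoff f n z - birkhoff f n z' ≤ C) (hC0 : 0 ≤ C)
    {φ : Omega 𝒜 → ℝ} (hφ : Continuous φ) {ε : ℝ} (hε : 0 < ε) :
    ∃ N, ∀ n ≥ N, ∀ x y, ((ruelle f)^[n] φ) x - ((ruelle f)^[n] φ) y ≤ ε := by
  obtain ⟨M, hM0, hM⟩ := exists_bound hφ
  set c := Real.exp (-C) with hc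
  have hc1 : c ≤ 1 := Real.exp_le_one_iff.2 (by linarith)
  have hc0 : 0 < c := Real.exp_pos (-C)
  have hind : ∀ k : ℕ, ∃ N, ∀ n ≥ N, ∀ x y, ((ruelle f)^[n] φ) x - ((ruelle f)^[n] φ) y
      ≤ (1 - c / 2) ^ k * (2 * M + 1) := by
    intro k
    induction k with
    | zero =>
      obtain ⟨N, hN⟩ := contraction h1 hC hC0 hφ (a := 2 * M) (fun x y => by
        have := abs_le.1 (hM x); have := abs_le.1 (hM y); linarith) one_pos
      refine ⟨N, fun n hn x y => (hN n hn x y).trans ?_⟩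
      rw [← hc]
      nlinarith
    | succ k ih =>
      obtain ⟨N, hN⟩ := ih
      set a := (1 - c / 2) ^ k * (2 * M + 1) with ha
      have ha0 : 0 < a := by
        have : 0 < 1 - c / 2 := by linarith
        positivity
      obtain ⟨N', hN'⟩ := contraction h1 hC hC0 (continuous_ruelle_iter hf hφ N)
        (hN N le_rfl) (ε := c / 2 * a) (by positivity)
      refine ⟨N' + N, fun n hn x y => ?_⟩
      obtain ⟨m, rfl⟩ := Nat.exists_eq_add_of_le' (le_trans (Nat.le_add_left N N') hn)
      have := hN' m (by omega) x y
      rw [← Function.iterate_add_apply] at this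
      refine this.trans (le_of_eq ?_)
      rw [ha, pow_succ]
      ring
  have ht : Tendsto (fun k : ℕ => (1 - c / 2) ^ k * (2 * M + 1)) atTop (𝓝 (0 * (2 * M + 1))) :=
    (tendsto_pow_atTop_nhds_zero_of_lt_one (by linarith) (by linarith)).mul_const _
  rw [zero_mul] at ht
  obtain ⟨k, hk⟩ := (ht.eventually (gt_mem_nhds hε)).exists
  obtain ⟨N, hN⟩ := hind k
  exact ⟨N, fun n hn x y => (hN n hn x y).trans hk.le⟩

/-- Values of iterates stay within the range of earlier iterates. -/
lemma iter_range (h1 : ∀ x, ∑ q : 𝒜, Real.exp (f (cons q x)) = 1)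
    {φ : Omega 𝒜 → ℝ} {b : ℝ} (hb : ∀ x, φ x ≤ b) (n : ℕ) (x : Omega 𝒜) :
    ((ruelle f)^[n] φ) x ≤ b := by
  rw [ruelle_iter]
  calc _ ≤ ∑ w : Fin n → 𝒜, Real.exp (birkhoff f n (concat w x)) * b :=
        Finset.sum_le_sum fun w _ => mul_le_mul_of_nonneg_left (hb _) (Real.exp_pos _).le
    _ = b := by rw [← Finset.sum_mul, sum_weights h1, one_mul]

lemma iter_range' (h1 : ∀ x, ∑ q : 𝒜, Real.exp (f (cons q x)) = 1)
    {φ : Omega 𝒜 → ℝ} {b : ℝ} (hb : ∀ x, b ≤ φ x) (n : ℕ) (x : Omega 𝒜) :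
    b ≤ ((ruelle f)^[n] φ) x := by
  rw [ruelle_iter]
  calc b = ∑ w : Fin n → 𝒜, Real.exp (birkhoff f n (concat w x)) * b := by
        rw [← Finset.sum_mul, sum_weights h1, one_mul]
    _ ≤ _ := Finset.sum_le_sum fun w _ => mul_le_mul_of_nonneg_left (hb _) (Real.exp_pos _).le

lemma exists_limit [Nonempty 𝒜] (hf : Continuous f)
    (h1 : ∀ x, ∑ q : 𝒜, Real.exp (f (cons q x)) = 1)
    {C : ℝ} (hC : ∀ (n : ℕ) (z z' : Omega 𝒜),
      (∀ i < n, z i = z' i) → birkhoff f n z - birkhoff f n z' ≤ C) (hC0 : 0 ≤ C)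
    {φ : Omega 𝒜 → ℝ} (hφ : Continuous φ) :
    ∃ c : ℝ, ∀ x, Tendsto (fun n => ((ruelle f)^[n] φ) x) atTop (𝓝 c) := by
  have x0 : Omega 𝒜 := Classical.arbitrary _
  have hcau : CauchySeq (fun n => ((ruelle f)^[n] φ) x0) := by
    rw [Metric.cauchySeq_iff']
    intro ε hε
    obtain ⟨N, hN⟩ := osc_tendsto hf h1 hC hC0 hφ (half_pos hε)
    refine ⟨N, fun n hn => ?_⟩
    obtain ⟨m, rfl⟩ := Nat.exists_eq_add_of_le' hn
    have hu := iter_range h1 (φ := (ruelle f)^[N] φ) (b := ((ruelle f)^[N] φ) x0 + ε / 2)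
      (fun x => by linarith [hN N le_rfl x x0]) m x0
    have hl := iter_range' h1 (φ := (ruelle f)^[N] φ) (b := ((ruelle f)^[N] φ) x0 - ε / 2)
      (fun x => by linarith [hN N le_rfl x0 x]) m x0
    rw [← Function.iterate_add_apply] at hu hl
    rw [Real.dist_eq, abs_lt]
    constructor <;> linarith
  obtain ⟨c, hc⟩ := cauchySeq_tendsto_of_complete hcau
  refine ⟨c, fun x => ?_⟩
  have hd : Tendsto (fun n => ((ruelle f)^[n] φ) x - ((ruelle f)^[n] φ) x0) atTop (𝓝 0) := by
    rw [Metric.tendsto_atTop]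
    intro ε hε
    obtain ⟨N, hN⟩ := osc_tendsto hf h1 hC hC0 hφ (half_pos hε)
    refine ⟨N, fun n hn => ?_⟩
    rw [Real.dist_eq, sub_zero, abs_lt]
    constructor <;> linarith [hN n hn x x0, hN n hn x0 x]
  simpa using hd.add hc

end transfer

section measures

variable {𝒜 : Type} [Fintype 𝒜] [TopologicalSpace 𝒜] [DiscreteTopology 𝒜]
  [MeasurableSpace 𝒜] [BorelSpace 𝒜]

lemma integrable_cont (μ : Measure (Omega 𝒜)) [IsFiniteMeasure μ] {φ : Omega 𝒜 → ℝ}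
    (hφ : Continuous φ) : Integrable φ μ :=
  hφ.integrable_of_hasCompactSupport (HasCompactSupport.of_compactSpace φ)

lemma measure_ext {μ ν : Measure (Omega 𝒜)} [IsFiniteMeasure μ] [IsFiniteMeasure ν]
    (h : ∀ φ : Omega 𝒜 → ℝ, Continuous φ → ∫ x, φ x ∂μ = ∫ x, φ x ∂ν) : μ = ν := by
  letI : MetricSpace (ℕ → 𝒜) := PiNat.metricSpace (E := fun _ => 𝒜)
  exact ext_of_forall_integral_eq_of_IsFiniteMeasure fun g => h g g.continuous

variable {f : Omega 𝒜 → ℝ}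

lemma ruelle_ofReal (φ : Omega 𝒜 → ℝ) (x : Omega 𝒜) :
    ruelle f (fun z => ((φ z : ℝ) : ℂ)) x = ((ruelle f φ x : ℝ) : ℂ) := by
  simp [ruelle]

lemma continuous_ruelle (hf : Continuous f) {φ : Omega 𝒜 → ℝ} (hφ : Continuous φ) :
    Continuous (ruelle f φ) :=
  continuous_ruelle_iter hf hφ 1

lemma real_of_complex {μ : Measure (Omega 𝒜)}
    (h : ∀ φ : Omega 𝒜 → ℂ, Continuous φ → ∫ x, ruelle f φ x ∂μ = ∫ x, φ x ∂μ)
    (φ : Omega 𝒜 → ℝ) (hφ : Continuous φ) : ∫ x, ruelle f φ x ∂μ = ∫ x, φ x ∂μ := by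
  have := h (fun z => ((φ z : ℝ) : ℂ)) (Complex.continuous_ofReal.comp hφ)
  simp only [ruelle_ofReal] at this
  rw [integral_complex_ofReal, integral_complex_ofReal] at this
  exact_mod_cast this

lemma complex_of_real (hf : Continuous f) {μ : Measure (Omega 𝒜)} [IsProbabilityMeasure μ]
    (h : ∀ φ : Omega 𝒜 → ℝ, Continuous φ → ∫ x, ruelle f φ x ∂μ = ∫ x, φ x ∂μ)
    (φ : Omega 𝒜 → ℂ) (hφ : Continuous φ) : ∫ x, ruelle f φ x ∂μ = ∫ x, φ x ∂μ := by
  have hr : Continuous fun z => (φ z).re := Complex.continuous_re.comp hφ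
  have hi : Continuous fun z => (φ z).im := Complex.continuous_im.comp hφ
  have e1 : ∀ x, ruelle f φ x = ((ruelle f (fun z => (φ z).re) x : ℝ) : ℂ)
      + ((ruelle f (fun z => (φ z).im) x : ℝ) : ℂ) * Complex.I := by
    intro x
    apply Complex.ext <;> simp [ruelle]
  have e2 : ∀ x, φ x = (((φ x).re : ℝ) : ℂ) + (((φ x).im : ℝ) : ℂ) * Complex.I :=
    fun x => (Complex.re_add_im _).symm
  have s : ∀ a b : Omega 𝒜 → ℝ, Continuous a → Continuous b →
      ∫ x, ((a x : ℂ) + (b x : ℂ) * Complex.I) ∂μ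
        = ((∫ x, a x ∂μ : ℝ) : ℂ) + ((∫ x, b x ∂μ : ℝ) : ℂ) * Complex.I := by
    intro a b ha hb
    rw [integral_add (integrable_cont μ ha).ofReal ((integrable_cont μ hb).ofReal.mul_const _),
      integral_mul_const, integral_complex_ofReal, integral_complex_ofReal]
  rw [integral_congr_ae (Eventually.of_forall e1), integral_congr_ae (Eventually.of_forall e2),
    s _ _ (continuous_ruelle hf hr) (continuous_ruelle hf hi), s _ _ hr hi, h _ hr, h _ hi]

lemma integral_iter (hf : Continuous f) {μ : Measure (Omega 𝒜)}
    (h : ∀ φ : Omega 𝒜 → ℝ, Continuous φ → ∫ x, ruelle f φ x ∂μ = ∫ x, φ x ∂μ)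
    {φ : Omega 𝒜 → ℝ} (hφ : Continuous φ) (n : ℕ) :
    ∫ x, ((ruelle f)^[n] φ) x ∂μ = ∫ x, φ x ∂μ := by
  induction n with
  | zero => rfl
  | succ n ih =>
    rw [Function.iterate_succ_apply', h _ (continuous_ruelle_iter hf hφ n), ih]

/-- All iterates converge to the integral against any `g`-measure. -/
lemma iter_near (hf : Continuous f) [Nonempty 𝒜]
    (h1 : ∀ x, ∑ q : 𝒜, Real.exp (f (cons q x)) = 1)
    {C : ℝ} (hC : ∀ (n : ℕ) (z z' : Omega 𝒜),
      (∀ i < n, z i = z' i) → birkhoff f n z - birkhoff f n z' ≤ C) (hC0 : 0 ≤ C)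
    {μ : Measure (Omega 𝒜)} [IsProbabilityMeasure μ]
    (h : ∀ φ : Omega 𝒜 → ℝ, Continuous φ → ∫ x, ruelle f φ x ∂μ = ∫ x, φ x ∂μ)
    {φ : Omega 𝒜 → ℝ} (hφ : Continuous φ) {ε : ℝ} (hε : 0 < ε) :
    ∃ n, ∀ x, |((ruelle f)^[n] φ) x - ∫ z, φ z ∂μ| ≤ ε := by
  obtain ⟨N, hN⟩ := osc_tendsto hf h1 hC hC0 hφ hε
  refine ⟨N, fun x => ?_⟩
  have hN := hN N le_rfl
  rw [← integral_iter hf h hφ N]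
  have hint := integrable_cont μ (continuous_ruelle_iter hf hφ N)
  have hu := integral_mono hint (integrable_const (((ruelle f)^[N] φ) x + ε))
    (fun y => by linarith [hN y x])
  have hl := integral_mono (integrable_const (((ruelle f)^[N] φ) x - ε)) hint
    (fun y => by linarith [hN x y])
  simp at hu hl
  rw [abs_le]
  constructor <;> linarith

lemma g_unique (hf : Continuous f) [Nonempty 𝒜]
    (h1 : ∀ x, ∑ q : 𝒜, Real.exp (f (cons q x)) = 1)
    {C : ℝ} (hC : ∀ (n : ℕ) (z z' : Omega 𝒜),
      (∀ i < n, z i = z' i) → birkhoff f n z - birkhoff f n z' ≤ C) (hC0 : 0 ≤ C)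
    {μ ν : Measure (Omega 𝒜)} [IsProbabilityMeasure μ] [IsProbabilityMeasure ν]
    (h : ∀ φ : Omega 𝒜 → ℝ, Continuous φ → ∫ x, ruelle f φ x ∂μ = ∫ x, φ x ∂μ)
    (h' : ∀ φ : Omega 𝒜 → ℝ, Continuous φ → ∫ x, ruelle f φ x ∂ν = ∫ x, φ x ∂ν) :
    ν = μ := by
  refine measure_ext fun φ hφ => ?_
  obtain ⟨c, hc⟩ := exists_limit hf h1 hC hC0 hφ
  have aux : ∀ (m : Measure (Omega 𝒜)) [IsProbabilityMeasure m],
      (∀ φ : Omega 𝒜 → ℝ, Continuous φ → ∫ x, ruelle f φ x ∂m = ∫ x, φ x ∂m) →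
      ∫ x, φ x ∂m = c := by
    intro m _ hm
    obtain ⟨M, hM0, hM⟩ := exists_bound hφ
    have ht := tendsto_integral_of_dominated_convergence (μ := m)
      (F := fun n => (ruelle f)^[n] φ) (f := fun _ => c) (fun _ => M)
      (fun n => (continuous_ruelle_iter hf hφ n).aestronglyMeasurable)
      (integrable_const _)
      (fun n => Eventually.of_forall fun x => by
        rw [Real.norm_eq_abs, abs_le]
        exact ⟨iter_range' h1 (fun y => (abs_le.1 (hM y)).1) n x,
          iter_range h1 (fun y => (abs_le.1 (hM y)).2) n x⟩)
      (Eventually.of_forall fun x => hc x)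
    simp only [integral_iter hf hm hφ] at ht
    have := tendsto_nhds_unique ht tendsto_const_nhds
    simpa using this.symm
  rw [aux μ h, aux ν h']

open CompactlySupported in
lemma g_exists (hf : Continuous f) [Nonempty 𝒜]
    (h1 : ∀ x, ∑ q : 𝒜, Real.exp (f (cons q x)) = 1)
    {C : ℝ} (hC : ∀ (n : ℕ) (z z' : Omega 𝒜),
      (∀ i < n, z i = z' i) → birkhoff f n z - birkhoff f n z' ≤ C) (hC0 : 0 ≤ C) :
    ∃ μ : Measure (Omega 𝒜), IsProbabilityMeasure μ ∧
      ∀ φ : Omega 𝒜 → ℝ, Continuous φ → ∫ x, ruelle f φ x ∂μ = ∫ x, φ x ∂μ := by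
  have x0 : Omega 𝒜 := Classical.arbitrary _
  choose c hc using fun (φ : C_c(Omega 𝒜, ℝ)) =>
    exists_limit hf h1 hC hC0 (φ := φ) φ.continuous
  let Λ : C_c(Omega 𝒜, ℝ) →ₚ[ℝ] ℝ := PositiveLinearMap.mk₀
    { toFun := c
      map_add' := fun φ ψ => by
        refine tendsto_nhds_unique (hc (φ + ψ) x0) ?_
        refine ((hc φ x0).add (hc ψ x0)).congr fun n => ?_
        simp only [ruelle_iter, ← Finset.sum_add_distrib]
        refine Finset.sum_congr rfl fun w _ => ?_
        simp [mul_add]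
      map_smul' := fun r φ => by
        refine tendsto_nhds_unique (hc (r • φ) x0) ?_
        refine ((hc φ x0).const_mul r).congr fun n => ?_
        simp only [ruelle_iter, Finset.mul_sum]
        refine Finset.sum_congr rfl fun w _ => ?_
        simp
        ring }
    (fun φ hφ => by
      refine ge_of_tendsto' (hc φ x0) fun n => ?_
      exact iter_range' h1 (fun y => hφ y) n x0)
  have hΛ : ∀ φ, Λ φ = c φ := fun φ => rfl
  let toC : (φ : Omega 𝒜 → ℝ) → Continuous φ → C_c(Omega 𝒜, ℝ) := fun φ hφ =>
    ⟨⟨φ, hφ⟩, HasCompactSupport.of_compactSpace φ⟩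
  have hint : ∀ (φ : Omega 𝒜 → ℝ) (hφ : Continuous φ),
      ∫ x, φ x ∂(RealRMK.rieszMeasure Λ) = c (toC φ hφ) := fun φ hφ =>
    RealRMK.integral_rieszMeasure Λ (toC φ hφ)
  refine ⟨RealRMK.rieszMeasure Λ, ?_, fun φ hφ => ?_⟩
  · have h2 := hint (fun _ => 1) continuous_const
    have h3 : c (toC (fun _ => 1) continuous_const) = 1 := by
      refine tendsto_nhds_unique (hc _ x0) ?_
      refine tendsto_const_nhds.congr fun n => ?_
      rw [ruelle_iter]
      have := sum_weights h1 n x0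
      simpa [toC] using this.symm
    rw [h3] at h2
    rw [integral_const, smul_eq_mul, mul_one, measureReal_def] at h2
    exact ⟨(ENNReal.toReal_eq_one_iff _).1 h2⟩
  · rw [hint _ (continuous_ruelle hf hφ), hint _ hφ]
    refine tendsto_nhds_unique (hc _ x0) ?_
    have := (hc (toC φ hφ) x0).comp (tendsto_add_atTop_nat 1)
    exact this

lemma g_invariant (hf : Continuous f) (h1 : ∀ x, ∑ q : 𝒜, Real.exp (f (cons q x)) = 1)
    {μ : Measure (Omega 𝒜)} [IsProbabilityMeasure μ]
    (h : ∀ φ : Omega 𝒜 → ℝ, Continuous φ → ∫ x, ruelle f φ x ∂μ = ∫ x, φ x ∂μ) :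
    Measure.map shift μ = μ := by
  haveI : IsProbabilityMeasure (Measure.map shift μ) :=
    Measure.isProbabilityMeasure_map continuous_shift.aemeasurable
  refine measure_ext fun φ hφ => ?_
  rw [integral_map continuous_shift.aemeasurable hφ.aestronglyMeasurable]
  rw [← h (fun x => φ (shift x)) (hφ.comp continuous_shift)]
  refine integral_congr_ae (Eventually.of_forall fun x => ?_)
  simp only [ruelle, Function.comp, shift_cons, smul_eq_mul]
  rw [← Finset.sum_mul, h1, one_mul]

lemma measurableSet_cyl {n : ℕ} (w : Fin n → 𝒜) : MeasurableSet (cyl w) :=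
  (isClopen_cyl w).1.measurableSet

lemma g_cyl (hf : Continuous f)
    {μ : Measure (Omega 𝒜)} [IsProbabilityMeasure μ]
    (h : ∀ φ : Omega 𝒜 → ℝ, Continuous φ → ∫ x, ruelle f φ x ∂μ = ∫ x, φ x ∂μ)
    {n : ℕ} (w : Fin n → 𝒜) :
    μ.real (cyl w) = ∫ x, Real.exp (birkhoff f n (concat w x)) ∂μ := by
  have hc : Continuous ((cyl w).indicator (fun _ => (1 : ℝ))) :=
    continuous_const.indicator (by simp [(isClopen_cyl w).frontier_eq])
  have := integral_iter hf h hc n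
  simp only [ruelle_iter_indicator] at this
  rw [this, integral_indicator_const _ (measurableSet_cyl w)]
  simp

lemma g_gibbs (hf : Continuous f)
    {C : ℝ} (hC : ∀ (n : ℕ) (z z' : Omega 𝒜),
      (∀ i < n, z i = z' i) → birkhoff f n z - birkhoff f n z' ≤ C)
    {μ : Measure (Omega 𝒜)} [IsProbabilityMeasure μ]
    (h : ∀ φ : Omega 𝒜 → ℝ, Continuous φ → ∫ x, ruelle f φ x ∂μ = ∫ x, φ x ∂μ)
    {n : ℕ} (w : Fin n → 𝒜) (x : Omega 𝒜) (hx : x ∈ cyl w) :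
    0 < μ.real (cyl w) ∧ |birkhoff f n x - Real.log (μ.real (cyl w))| ≤ C := by
  have hag : ∀ y, ∀ i < n, x i = concat w y i := fun y i hi => by
    rw [concat_lt _ _ hi, ← hx ⟨i, hi⟩]
  have hint : Integrable (fun y => Real.exp (birkhoff f n (concat w y))) μ :=
    integrable_cont μ (Real.continuous_exp.comp
      ((continuous_birkhoff hf n).comp (continuous_concat w)))
  have hl := integral_mono (integrable_const (Real.exp (birkhoff f n x - C))) hint
    (fun y => Real.exp_le_exp.2 (by linarith [hC n _ _ (hag y)]))
  have hu := integral_mono hint (integrable_const (Real.exp (birkhoff f n x + C)))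
    (fun y => Real.exp_le_exp.2 (by linarith [hC n _ _ (fun i hi => (hag y i hi).symm)]))
  rw [← g_cyl hf h] at hl hu
  simp only [integral_const, probReal_univ, one_smul] at hl hu
  have hpos : 0 < μ.real (cyl w) := lt_of_lt_of_le (Real.exp_pos _) hl
  refine ⟨hpos, ?_⟩
  have a1 := (Real.le_log_iff_exp_le hpos).2 hl
  have a2 := (Real.log_le_iff_le_exp hpos).2 hu
  rw [abs_le]
  constructor <;> linarith

end measures

section entropy

variable {𝒜 : Type} [Fintype 𝒜] [TopologicalSpace 𝒜] [DiscreteTopology 𝒜]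
  [MeasurableSpace 𝒜] [BorelSpace 𝒜] {f : Omega 𝒜 → ℝ}

lemma step_eq {n : ℕ} (g : (Fin n → 𝒜) → ℝ) (x : Omega 𝒜) :
    g (fun i => x i) = ∑ w : Fin n → 𝒜, (cyl w).indicator (fun _ => g w) x := by
  rw [Finset.sum_eq_single (fun i : Fin n => x i)]
  · rw [indicator_of_mem ((mem_cyl_iff _ _).2 rfl)]
  · intro w _ hw
    rw [indicator_of_notMem]
    intro h
    exact hw ((mem_cyl_iff _ _).1 h).symm
  · simp

lemma step_integrable {n : ℕ} (ν : Measure (Omega 𝒜)) [IsProbabilityMeasure ν]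
    (g : (Fin n → 𝒜) → ℝ) : Integrable (fun x : Omega 𝒜 => g (fun i => x i)) ν := by
  simp only [step_eq g]
  exact integrable_finset_sum _ fun w _ =>
    (integrable_const _).indicator (measurableSet_cyl w)

lemma step_integral {n : ℕ} (ν : Measure (Omega 𝒜)) [IsProbabilityMeasure ν]
    (g : (Fin n → 𝒜) → ℝ) :
    ∫ x : Omega 𝒜, g (fun i => x i) ∂ν = ∑ w : Fin n → 𝒜, ν.real (cyl w) * g w := by
  simp only [step_eq g]
  rw [integral_finset_sum _ fun w _ => (integrable_const _).indicator (measurableSet_cyl w)]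
  refine Finset.sum_congr rfl fun w _ => ?_
  rw [integral_indicator_const _ (measurableSet_cyl w), smul_eq_mul]

lemma sum_cyl (n : ℕ) (ν : Measure (Omega 𝒜)) [IsProbabilityMeasure ν] :
    ∑ w : Fin n → 𝒜, ν.real (cyl w) = 1 := by
  have := step_integral (n := n) ν (fun _ => 1)
  simpa using this.symm

lemma integral_shift_iter {ν : Measure (Omega 𝒜)} [IsProbabilityMeasure ν]
    (hν : Measure.map shift ν = ν) {φ : Omega 𝒜 → ℝ} (hφ : Continuous φ) (n : ℕ) :
    ∫ x, φ (shift^[n] x) ∂ν = ∫ x, φ x ∂ν := by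
  have hp : MeasurePreserving shift ν ν := ⟨continuous_shift.measurable, hν⟩
  have hm := (hp.iterate n).map_eq
  conv_rhs => rw [← hm]
  rw [integral_map (continuous_shift.iterate n).aemeasurable hφ.aestronglyMeasurable]

lemma integral_birkhoff {ν : Measure (Omega 𝒜)} [IsProbabilityMeasure ν]
    (hν : Measure.map shift ν = ν) (hf : Continuous f) (n : ℕ) :
    ∫ x, birkhoff f n x ∂ν = n * ∫ x, f x ∂ν := by
  simp only [birkhoff]
  rw [integral_finset_sum (Finset.range n) (f := fun j x => f (shift^[j] x)) fun j _ =>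
    integrable_cont ν (hf.comp (continuous_shift.iterate j))]
  simp [integral_shift_iter hν hf]

lemma gibbs_ineq {a m : ℝ} (ha : 0 ≤ a) (hm : 0 < m) :
    Real.negMulLog a + a * Real.log m ≤ m - a := by
  rcases ha.eq_or_lt with rfl | ha
  · simpa using hm.le
  · have h := Real.log_le_sub_one_of_pos (div_pos hm ha)
    rw [Real.log_div hm.ne' ha.ne'] at h
    have h2 := mul_le_mul_of_nonneg_left h ha.le
    have h3 : a * (m / a - 1) = m - a := by field_simp
    rw [Real.negMulLog]
    linarith

lemma blockEntropy_eq (ν : Measure (Omega 𝒜)) (n : ℕ) :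
    blockEntropy ν n = ∑ w : Fin n → 𝒜, Real.negMulLog (ν.real (cyl w)) := rfl

lemma blockEntropy_nonneg (ν : Measure (Omega 𝒜)) [IsProbabilityMeasure ν] (n : ℕ) :
    0 ≤ blockEntropy ν n := by
  rw [blockEntropy_eq]
  exact Finset.sum_nonneg fun w _ => Real.negMulLog_nonneg measureReal_nonneg measureReal_le_one

lemma KS_le (ν : Measure (Omega 𝒜)) [IsProbabilityMeasure ν] (n : ℕ) :
    KSentropy ν ≤ blockEntropy ν (n + 1) / (n + 1) := by
  refine ciInf_le ⟨0, ?_⟩ n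
  rintro _ ⟨k, rfl⟩
  exact div_nonneg (blockEntropy_nonneg ν _) (by positivity)

section fixed

variable {C : ℝ} {μ ν : Measure (Omega 𝒜)} [IsProbabilityMeasure μ] [IsProbabilityMeasure ν]

lemma int_log (hf : Continuous f) [Nonempty 𝒜]
    (hC : ∀ (n : ℕ) (z z' : Omega 𝒜),
      (∀ i < n, z i = z' i) → birkhoff f n z - birkhoff f n z' ≤ C)
    (h : ∀ φ : Omega 𝒜 → ℝ, Continuous φ → ∫ x, ruelle f φ x ∂μ = ∫ x, φ x ∂μ)
    (hν : Measure.map shift ν = ν) (n : ℕ) :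
    |n * ∫ x, f x ∂ν - ∑ w : Fin n → 𝒜, ν.real (cyl w) * Real.log (μ.real (cyl w))| ≤ C := by
  rw [← integral_birkhoff hν hf, ← step_integral ν (fun w => Real.log (μ.real (cyl w))),
    ← integral_sub (integrable_cont ν (continuous_birkhoff hf n)) (step_integrable ν
      (fun w => Real.log (μ.real (cyl w))))]
  have := norm_integral_le_of_norm_le_const (μ := ν) (C := C)
    (f := fun x => birkhoff f n x - Real.log (μ.real (cyl (fun i : Fin n => x i))))
    (Eventually.of_forall fun x =>
      (g_gibbs hf hC h (fun i : Fin n => x i) x ((mem_cyl_iff _ _).2 rfl)).2)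
  simpa using this

lemma cyl_pos (hf : Continuous f) [Nonempty 𝒜]
    (hC : ∀ (n : ℕ) (z z' : Omega 𝒜),
      (∀ i < n, z i = z' i) → birkhoff f n z - birkhoff f n z' ≤ C)
    (h : ∀ φ : Omega 𝒜 → ℝ, Continuous φ → ∫ x, ruelle f φ x ∂μ = ∫ x, φ x ∂μ)
    {n : ℕ} (w : Fin n → 𝒜) : 0 < μ.real (cyl w) :=
  (g_gibbs hf hC h w (concat w (Classical.arbitrary _)) ((concat_mem_cyl w w _).2 rfl)).1

lemma entropy_upper (hf : Continuous f) [Nonempty 𝒜]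
    (hC : ∀ (n : ℕ) (z z' : Omega 𝒜),
      (∀ i < n, z i = z' i) → birkhoff f n z - birkhoff f n z' ≤ C)
    (h : ∀ φ : Omega 𝒜 → ℝ, Continuous φ → ∫ x, ruelle f φ x ∂μ = ∫ x, φ x ∂μ)
    (hν : Measure.map shift ν = ν) (n : ℕ) :
    blockEntropy ν n + n * ∫ x, f x ∂ν ≤ C := by
  have h1 := (abs_le.1 (int_log hf hC h hν n)).2
  have h2 := Finset.sum_le_sum fun (w : Fin n → 𝒜) (_ : w ∈ Finset.univ) =>
    gibbs_ineq (measureReal_nonneg (μ := ν) (s := cyl w)) (cyl_pos hf hC h w)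
  rw [Finset.sum_add_distrib, Finset.sum_sub_distrib, sum_cyl, sum_cyl, ← blockEntropy_eq] at h2
  linarith

lemma KS_upper (hf : Continuous f) [Nonempty 𝒜]
    (hC : ∀ (n : ℕ) (z z' : Omega 𝒜),
      (∀ i < n, z i = z' i) → birkhoff f n z - birkhoff f n z' ≤ C)
    (h : ∀ φ : Omega 𝒜 → ℝ, Continuous φ → ∫ x, ruelle f φ x ∂μ = ∫ x, φ x ∂μ)
    (hν : Measure.map shift ν = ν) :
    KSentropy ν + ∫ x, f x ∂ν ≤ 0 := by
  have key : ∀ n : ℕ, KSentropy ν + ∫ x, f x ∂ν ≤ C * (1 / ((n : ℝ) + 1)) := by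
    intro n
    have h1 := KS_le ν n
    have h2 := entropy_upper hf hC h hν (n + 1)
    have hn : (0 : ℝ) < n + 1 := by positivity
    push_cast at h2
    rw [le_div_iff₀ hn] at h1
    rw [mul_one_div, le_div_iff₀ hn]
    linarith
  have ht := (tendsto_one_div_add_atTop_nhds_zero_nat (𝕜 := ℝ)).const_mul C
  rw [mul_zero] at ht
  exact ge_of_tendsto' ht key

lemma entropy_lower (hf : Continuous f)
    (h : ∀ φ : Omega 𝒜 → ℝ, Continuous φ → ∫ x, ruelle f φ x ∂μ = ∫ x, φ x ∂μ)
    (hμ : Measure.map shift μ = μ) (n : ℕ) :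
    -(n * ∫ x, f x ∂μ) ≤ blockEntropy μ n := by
  have hcw : ∀ w : Fin n → 𝒜, Continuous fun x => Real.exp (birkhoff f n (concat w x)) :=
    fun w => Real.continuous_exp.comp ((continuous_birkhoff hf n).comp (continuous_concat w))
  have hcn : ∀ w : Fin n → 𝒜, Continuous fun x =>
      Real.negMulLog (Real.exp (birkhoff f n (concat w x))) :=
    fun w => Real.continuous_negMulLog.comp (hcw w)
  have hj : ∀ w : Fin n → 𝒜, ∫ x, Real.negMulLog (Real.exp (birkhoff f n (concat w x))) ∂μ
      ≤ Real.negMulLog (μ.real (cyl w)) := by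
    intro w
    rw [g_cyl hf h w]
    exact Real.concaveOn_negMulLog.le_map_integral Real.continuous_negMulLog.continuousOn
      isClosed_Ici (Eventually.of_forall fun x => (Real.exp_pos _).le)
      (integrable_cont μ (hcw w)) (integrable_cont μ (hcn w))
  have hs := Finset.sum_le_sum fun w (_ : w ∈ Finset.univ) => hj w
  rw [← blockEntropy_eq, ← integral_finset_sum _ fun w _ => integrable_cont μ (hcn w)] at hs
  refine le_trans (le_of_eq ?_) hs
  rw [← integral_birkhoff hμ hf, ← integral_neg,
    ← integral_iter hf h (φ := fun x => -birkhoff f n x) (continuous_birkhoff hf n).neg n]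
  refine integral_congr_ae (Eventually.of_forall fun x => ?_)
  simp only [ruelle_iter]
  refine Finset.sum_congr rfl fun w _ => ?_
  rw [Real.negMulLog, Real.log_exp]
  simp

lemma KS_lower (hf : Continuous f)
    (h : ∀ φ : Omega 𝒜 → ℝ, Continuous φ → ∫ x, ruelle f φ x ∂μ = ∫ x, φ x ∂μ)
    (hμ : Measure.map shift μ = μ) : -∫ x, f x ∂μ ≤ KSentropy μ := by
  refine le_ciInf fun n => ?_
  have := entropy_lower hf h hμ (n + 1)
  have hn : (0 : ℝ) < n + 1 := by positivity
  rw [le_div_iff₀ hn]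
  push_cast at this
  linarith

/-- Bounded relative entropy controls `ν` on small unions of cylinders. -/
lemma cyl_control (hf : Continuous f) [Nonempty 𝒜]
    (hC : ∀ (n : ℕ) (z z' : Omega 𝒜),
      (∀ i < n, z i = z' i) → birkhoff f n z - birkhoff f n z' ≤ C)
    (h : ∀ φ : Omega 𝒜 → ℝ, Continuous φ → ∫ x, ruelle f φ x ∂μ = ∫ x, φ x ∂μ)
    (hν : Measure.map shift ν = ν) (n : ℕ) (hent : 0 ≤ blockEntropy ν n + n * ∫ x, f x ∂ν)
    (A : Finset (Fin n → 𝒜)) {t : ℝ} (ht : 0 < t) (hA : t * ∑ w ∈ A, μ.real (cyl w) ≤ 1) :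
    (∑ w ∈ A, ν.real (cyl w)) * Real.log t ≤ 1 + C := by
  have hpos := fun w : Fin n → 𝒜 => cyl_pos hf hC h w
  have h1 := (abs_le.1 (int_log hf hC h hν n)).2
  have h2 := Finset.sum_le_sum fun (w : Fin n → 𝒜) (_ : w ∈ Finset.univ) =>
    gibbs_ineq (m := (if w ∈ A then t else 1) * μ.real (cyl w))
      (measureReal_nonneg (μ := ν) (s := cyl w))
      (mul_pos (by split_ifs <;> positivity) (hpos w))
  have h3 : ∀ w : Fin n → 𝒜,
      ν.real (cyl w) * Real.log ((if w ∈ A then t else 1) * μ.real (cyl w))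
      = (if w ∈ A then ν.real (cyl w) * Real.log t else 0)
        + ν.real (cyl w) * Real.log (μ.real (cyl w)) := by
    intro w
    split_ifs
    · rw [Real.log_mul ht.ne' (hpos w).ne']; ring
    · simp
  have h4 : ∑ w : Fin n → 𝒜, (if w ∈ A then t else 1) * μ.real (cyl w) ≤ 2 := by
    calc _ ≤ ∑ w : Fin n → 𝒜, ((if w ∈ A then t * μ.real (cyl w) else 0) + μ.real (cyl w)) := by
          refine Finset.sum_le_sum fun w _ => ?_
          have := (hpos w).le
          split_ifs <;> linarith
      _ = t * ∑ w ∈ A, μ.real (cyl w) + 1 := by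
          rw [Finset.sum_add_distrib, sum_cyl, Finset.mul_sum]
          simp
      _ ≤ 2 := by linarith
  simp only [h3, Finset.sum_add_distrib, Finset.sum_sub_distrib] at h2
  rw [sum_cyl, ← blockEntropy_eq] at h2
  have h5 : ∑ w : Fin n → 𝒜, (if w ∈ A then ν.real (cyl w) * Real.log t else 0)
      = (∑ w ∈ A, ν.real (cyl w)) * Real.log t := by
    rw [Finset.sum_mul]
    simp
  rw [h5] at h2
  linarith

lemma real_words (m : Measure (Omega 𝒜)) [IsProbabilityMeasure m] {n : ℕ}
    (A : Finset (Fin n → 𝒜)) :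
    m.real {x : Omega 𝒜 | (fun i : Fin n => x i) ∈ A} = ∑ w ∈ A, m.real (cyl w) := by
  have e : {x : Omega 𝒜 | (fun i : Fin n => x i) ∈ A} = ⋃ w ∈ A, cyl w := by
    ext x
    simp [mem_cyl_iff]
  rw [e, measureReal_biUnion_finset]
  · intro w _ w' _ hne
    rw [Function.onFun, Set.disjoint_left]
    intro x hx hx'
    exact hne (((mem_cyl_iff _ _).1 hx).symm.trans ((mem_cyl_iff _ _).1 hx'))
  · intro w _
    exact measurableSet_cyl w

lemma abs_cont (hf : Continuous f) [Nonempty 𝒜]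
    (hC : ∀ (n : ℕ) (z z' : Omega 𝒜),
      (∀ i < n, z i = z' i) → birkhoff f n z - birkhoff f n z' ≤ C) (hC0 : 0 ≤ C)
    (h : ∀ φ : Omega 𝒜 → ℝ, Continuous φ → ∫ x, ruelle f φ x ∂μ = ∫ x, φ x ∂μ)
    (hν : Measure.map shift ν = ν)
    (hent : ∀ n : ℕ, 0 ≤ blockEntropy ν (n + 1) + (n + 1 : ℕ) * ∫ x, f x ∂ν) :
    ν ≪ μ := by
  let : MetricSpace (ℕ → 𝒜) := PiNat.metricSpace (E := fun _ => 𝒜)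
  intro S hS
  have key : ∀ s : ℝ, 0 < s → ν.real S ≤ (1 + C) / s := by
    intro s hs
    have ht := Real.exp_pos s
    obtain ⟨U, hSU, hU, hμU⟩ := Set.exists_isOpen_le_add S μ
      (ε := ENNReal.ofReal (Real.exp (-s))) (by simp [Real.exp_pos])
    rw [hS, zero_add] at hμU
    have hμU' : μ.real U ≤ Real.exp (-s) :=
      ENNReal.toReal_le_of_le_ofReal (Real.exp_pos _).le hμU
    let A : ∀ n : ℕ, Finset (Fin (n + 1) → 𝒜) := fun n =>
      Finset.univ.filter fun w => cyl w ⊆ U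
    let V : ℕ → Set (Omega 𝒜) := fun n => {x | (fun i : Fin (n + 1) => x i) ∈ A n}
    have hVU : ∀ n, V n ⊆ U := by
      intro n x hx
      have : cyl (fun i : Fin (n + 1) => x i) ⊆ U := (Finset.mem_filter.1 hx).2
      exact this ((mem_cyl_iff _ _).2 rfl)
    have hUV : U = ⋃ n, V n := by
      refine Subset.antisymm (fun x hx => ?_) (iUnion_subset hVU)
      obtain ⟨N, hN⟩ := open_cyl hU hx
      refine mem_iUnion.2 ⟨N, Finset.mem_filter.2 ⟨Finset.mem_univ _, fun y hy => ?_⟩⟩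
      exact hN y fun i hi => hy ⟨i, by omega⟩
    have hmono : Monotone V := by
      intro n m hnm x hx
      have : cyl (fun i : Fin (n + 1) => x i) ⊆ U := (Finset.mem_filter.1 hx).2
      refine Finset.mem_filter.2 ⟨Finset.mem_univ _, fun y hy => this ?_⟩
      intro i
      exact hy ⟨i, by omega⟩
    have hVb : ∀ n, ν.real (V n) ≤ (1 + C) / s := by
      intro n
      have h1 := cyl_control hf hC h hν (n + 1) (hent n) (A n) ht (by
        rw [← real_words μ (A n)]
        have : μ.real (V n) ≤ Real.exp (-s) := (measureReal_mono (hVU n)).trans hμU'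
        calc Real.exp s * μ.real (V n) ≤ Real.exp s * Real.exp (-s) := by gcongr
          _ = 1 := by rw [← Real.exp_add]; simp)
      rw [← real_words ν (A n), Real.log_exp] at h1
      rw [le_div_iff₀ hs]
      exact h1
    have hUb : ν U ≤ ENNReal.ofReal ((1 + C) / s) := by
      rw [hUV, hmono.measure_iUnion]
      refine iSup_le fun n => ?_
      rw [← ofReal_measureReal]
      exact ENNReal.ofReal_le_ofReal (hVb n)
    refine ENNReal.toReal_le_of_le_ofReal (by positivity) ((measure_mono hSU).trans hUb)
  have hz : ν.real S ≤ 0 := by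
    have ht : Tendsto (fun s : ℝ => (1 + C) / s) atTop (𝓝 0) :=
      tendsto_const_nhds.div_atTop tendsto_id
    refine ge_of_tendsto ht ?_
    filter_upwards [eventually_gt_atTop 0] with s hs using key s hs
  have := le_antisymm hz measureReal_nonneg
  exact (measureReal_eq_zero_iff (measure_ne_top ν S)).1 this

lemma eq_of_abs_cont (hf : Continuous f) [Nonempty 𝒜]
    (h1 : ∀ x, ∑ q : 𝒜, Real.exp (f (cons q x)) = 1)
    (hC : ∀ (n : ℕ) (z z' : Omega 𝒜),
      (∀ i < n, z i = z' i) → birkhoff f n z - birkhoff f n z' ≤ C) (hC0 : 0 ≤ C)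
    (h : ∀ φ : Omega 𝒜 → ℝ, Continuous φ → ∫ x, ruelle f φ x ∂μ = ∫ x, φ x ∂μ)
    (hν : Measure.map shift ν = ν) (hac : ν ≪ μ) : ν = μ := by
  let : MetricSpace (ℕ → 𝒜) := PiNat.metricSpace (E := fun _ => 𝒜)
  have hLD : ν.HaveLebesgueDecomposition μ := Measure.haveLebesgueDecomposition_of_sigmaFinite ν μ
  refine measure_ext fun φ hφ => ?_
  obtain ⟨M, hM0, hM⟩ := exists_bound hφ
  set r : Omega 𝒜 → ℝ := fun x => (ν.rnDeriv μ x).toReal with hr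
  have hri : Integrable r μ := Measure.integrable_toReal_rnDeriv
  have hr1 : ∫ x, r x ∂μ = 1 := by
    have := integral_rnDeriv_smul (μ := ν) (ν := μ) (f := fun _ => (1 : ℝ)) hac
    simpa using this
  have hest : ∀ ε : ℝ, 0 < ε → |∫ x, φ x ∂ν - ∫ x, φ x ∂μ| ≤ (3 * M) * ε := by
    intro ε hε
    obtain ⟨k, hk, hki⟩ := hri.exists_boundedContinuous_integral_sub_le hε
    have hkc : Continuous k := k.continuous
    obtain ⟨n, hn⟩ := iter_near hf h1 hC hC0 h hkc hε
    have hφn : Continuous fun x => φ (shift^[n] x) := hφ.comp (continuous_shift.iterate n)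
    have e1 : ∫ x, φ x ∂ν = ∫ x, r x * φ (shift^[n] x) ∂μ := by
      rw [← integral_shift_iter hν hφ n]
      have := integral_rnDeriv_smul (μ := ν) (ν := μ) (f := fun x => φ (shift^[n] x)) hac
      simpa using this.symm
    have e2 : ∫ x, φ (shift^[n] x) * k x ∂μ = ∫ x, φ x * ((ruelle f)^[n] k) x ∂μ := by
      rw [← integral_iter hf h (φ := fun x => φ (shift^[n] x) * k x) (hφn.mul hkc) n]
      refine integral_congr_ae (Eventually.of_forall fun x => ?_)
      exact ruelle_iter_shift_mul φ k n x
    have hkmean : |∫ x, k x ∂μ - 1| ≤ ε := by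
      rw [← hr1, ← integral_sub hki hri, ← Real.norm_eq_abs]
      refine (norm_integral_le_integral_norm _).trans ?_
      simpa only [norm_sub_rev] using hk
    have b1 : |∫ x, φ x ∂ν - ∫ x, φ (shift^[n] x) * k x ∂μ| ≤ M * ε := by
      have i1 : Integrable (fun x => r x * φ (shift^[n] x)) μ :=
        hri.mul_bdd (c := M) hφn.aestronglyMeasurable (Eventually.of_forall fun x => hM _)
      rw [e1, ← integral_sub i1 (integrable_cont μ (φ := fun x => φ (shift^[n] x) * k x) (hφn.mul hkc)), ← Real.norm_eq_abs]
      refine (norm_integral_le_of_norm_le (g := fun x => M * ‖r x - k x‖)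
        ((hri.sub hki).norm.const_mul M) (Eventually.of_forall fun x => ?_)).trans ?_
      · have : r x * φ (shift^[n] x) - φ (shift^[n] x) * k x
          = φ (shift^[n] x) * (r x - k x) := by ring
        rw [this, norm_mul]
        exact mul_le_mul_of_nonneg_right (hM _) (norm_nonneg _)
      · rw [integral_const_mul]
        exact mul_le_mul_of_nonneg_left hk hM0
    have b2 : |∫ x, φ x * ((ruelle f)^[n] k) x ∂μ - ∫ x, φ x ∂μ| ≤ M * (2 * ε) := by
      rw [← integral_sub (integrable_cont μ (φ := fun x => φ x * ((ruelle f)^[n] k) x)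
        (hφ.mul (continuous_ruelle_iter hf hkc n)))
        (integrable_cont μ hφ), ← Real.norm_eq_abs]
      have := norm_integral_le_of_norm_le_const (μ := μ) (C := M * (2 * ε))
        (f := fun x => φ x * ((ruelle f)^[n] k) x - φ x) (Eventually.of_forall fun x => by
          have e : φ x * ((ruelle f)^[n] k) x - φ x = φ x * (((ruelle f)^[n] k) x - 1) := by ring
          rw [e, norm_mul]
          have : ‖((ruelle f)^[n] k) x - 1‖ ≤ 2 * ε := by
            have a := abs_le.1 (hn x)
            have b := abs_le.1 hkmean
            rw [Real.norm_eq_abs, abs_le]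
            constructor <;> linarith
          exact mul_le_mul (hM x) this (norm_nonneg _) hM0)
      simpa using this
    rw [e2] at b1
    have a := abs_le.1 b1
    have b := abs_le.1 b2
    rw [abs_le]
    constructor <;> linarith
  have hz : |∫ x, φ x ∂ν - ∫ x, φ x ∂μ| ≤ 0 := by
    refine le_of_forall_pos_le_add fun ε hε => ?_
    have := hest (ε / (3 * M + 1)) (by positivity)
    refine this.trans ?_
    rw [zero_add, mul_div_assoc', div_le_iff₀ (by positivity)]
    nlinarith
  have := abs_nonpos_iff.1 hz
  linarith

end fixed

end entropy

/-- Ruelle–Perron–Frobenius / Walters' theorem for the Walters class.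
If `log J` is a `g`-function in the Walters class, then there is exactly one Borel probability
`μ` with `L_{log J}^* μ = μ`; it is shift-invariant and fully supported, `P(log J) = 0`, `μ` is
the unique equilibrium state of `log J`, and `h_μ(σ) = −∫ log J dμ > 0`. -/
theorem statement17 {𝒜 : Type} [Fintype 𝒜] [TopologicalSpace 𝒜] [DiscreteTopology 𝒜]
    [MeasurableSpace 𝒜] [BorelSpace 𝒜] (hcard : 2 ≤ Fintype.card 𝒜)
    (J : Omega 𝒜 → ℝ) (hJ : IsGFunction J)
    (hW : WaltersClass (fun z => Real.log (J z))) :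
    ∃ μ : Measure (Omega 𝒜),
      IsGMeasure J μ ∧
      (∀ ν : Measure (Omega 𝒜), IsGMeasure J ν → ν = μ) ∧
      Measure.map shift μ = μ ∧
      (∀ U : Set (Omega 𝒜), IsOpen U → U.Nonempty → 0 < μ U) ∧
      pressure (fun z => Real.log (J z)) = 0 ∧
      IsEquilibrium (fun z => Real.log (J z)) μ ∧
      (∀ ν : Measure (Omega 𝒜), IsEquilibrium (fun z => Real.log (J z)) ν → ν = μ) ∧
      KSentropy μ = -∫ z, Real.log (J z) ∂μ ∧
      0 < KSentropy μ := by
  obtain ⟨-, hJpos, hJsum⟩ := hJ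
  have hne : Nonempty 𝒜 := Fintype.card_pos_iff.1 (by omega)
  have hnt : Nontrivial 𝒜 := Fintype.one_lt_card_iff_nontrivial.1 (by omega)
  set f : Omega 𝒜 → ℝ := fun z => Real.log (J z) with hfdef
  have hf : Continuous f := hW.1
  have h1 : ∀ x, ∑ q : 𝒜, Real.exp (f (cons q x)) = 1 := by
    intro x
    simp only [hfdef, Real.exp_log (hJpos _)]
    exact hJsum x
  obtain ⟨C, hC0, hC⟩ := distortion hW
  obtain ⟨μ, hμp, h⟩ := g_exists hf h1 hC hC0
  have hinv := g_invariant hf h1 h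
  have hKS : KSentropy μ = -∫ z, f z ∂μ :=
    le_antisymm (by linarith [KS_upper hf hC h hinv]) (KS_lower hf h hinv)
  have hpress : pressure f = 0 := by
    refine IsGreatest.csSup_eq ⟨⟨μ, hμp, hinv, by rw [hKS]; ring⟩, ?_⟩
    rintro _ ⟨ν, hνp, hν, rfl⟩
    exact KS_upper hf hC h hν
  have hneg : ∀ z, f z < 0 := by
    intro z
    refine Real.log_neg (hJpos z) ?_
    obtain ⟨q, hq⟩ := exists_ne (z 0)
    have hz : cons (z 0) (shift z) = z := by
      funext n
      cases n <;> rfl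
    rw [← hJsum (shift z)]
    conv_lhs => rw [← hz]
    exact Finset.single_lt_sum (f := fun q => J (cons q (shift z))) hq (Finset.mem_univ _) (Finset.mem_univ _) (hJpos _)
      fun _ _ _ => (hJpos _).le
  refine ⟨μ, ⟨hμp, complex_of_real hf h⟩, ?_, hinv, ?_, hpress, ⟨hμp, hinv, ?_⟩, ?_, hKS, ?_⟩
  · rintro ν ⟨hνp, hν⟩
    exact g_unique hf h1 hC hC0 h (real_of_complex hν)
  · rintro U hU ⟨x, hx⟩
    obtain ⟨N, hN⟩ := open_cyl hU hx
    have hp := cyl_pos hf hC h (fun i : Fin N => x i)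
    have hsub : cyl (fun i : Fin N => x i) ⊆ U := fun y hy => hN y fun i hi => hy ⟨i, hi⟩
    refine lt_of_lt_of_le ?_ (measure_mono hsub)
    exact (ENNReal.toReal_pos_iff.1 hp).1
  · rw [hpress, hKS]
    ring
  · rintro ν ⟨hνp, hν, he⟩
    rw [hpress] at he
    refine eq_of_abs_cont hf h1 hC hC0 h hν (abs_cont hf hC hC0 h hν fun n => ?_)
    have h2 := KS_le ν n
    have hn : (0 : ℝ) < n + 1 := by positivity
    rw [le_div_iff₀ hn] at h2
    push_cast
    have h3 : KSentropy ν = -∫ x, f x ∂ν := by linarith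
    rw [h3] at h2
    linarith
  · rw [hKS]
    obtain ⟨z0, -, hz0⟩ := isCompact_univ.exists_isMaxOn (univ_nonempty (α := Omega 𝒜))
      hf.continuousOn
    have hle := integral_mono (integrable_cont μ hf) (integrable_const (f z0))
      (fun x => hz0 (mem_univ x))
    simp only [integral_const, probReal_univ, one_smul] at hle
    linarith [hneg z0]

end GS
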